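/- Let G be a connected multigraph and G_0 a subgraph of G. Let G◇G_0 be the graph obtained from G by applying, for every vertex v of G_0 with E_G(v) ≠ E_{G_0}(v), the splitting operation G_{v◁E_0} with E_0 = E_{G_0}(v): this adds a new vertex v' and a new edge vv', and reroutes every edge of E_G(v) − E_0 from v to v'. Let M = E(G◇G_0) − E(G). Then for any N ⊆ E(G), τ_G(N) = τ_{G◇G_0}(M ∪ N). -/

import Mathlib

/-!
Spanning trees of multigraphs: common definitions.

A multigraph on a vertex type `V` with edge type `E` is given by an incidence
map `inc : E → Sym2 V` sending each edge to its (unordered) pair of endpoints.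
-/

namespace PaperST

universe u v

/-- A multigraph on vertex type `V` with edge type `E`. -/
structure Multigraph (V : Type u) (E : Type v) where
  /-- the two (possibly equal) endpoints of each edge -/
  inc : E → Sym2 V

namespace Multigraph

variable {V : Type u} {E : Type v}

/-- One step along an edge of `T`. -/
def Step (G : Multigraph V E) (T : Set E) (u v : V) : Prop :=
  ∃ e ∈ T, G.inc e = s(u, v)

theorem step_symm (G : Multigraph V E) (T : Set E) : Symmetric (G.Step T) := by
  rintro u v ⟨e, he, hinc⟩
  exact ⟨e, he, by rw [hinc]; exact Sym2.eq_swap⟩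

/-- Reachability using only edges in `T`. -/
def Reach (G : Multigraph V E) (T : Set E) : V → V → Prop :=
  Relation.ReflTransGen (G.Step T)

/-- The spanning subgraph `G⟨T⟩` is connected. -/
def ConnectedOn (G : Multigraph V E) (T : Set E) : Prop :=
  ∀ u v : V, G.Reach T u v

/-- `G` is connected. -/
def Connected (G : Multigraph V E) : Prop :=
  G.ConnectedOn Set.univ

/-- `G` has no loops. -/
def Loopless (G : Multigraph V E) : Prop :=
  ∀ e : E, ¬ (G.inc e).IsDiag

/-- A spanning tree of a (finite) multigraph: a connected spanning subgraph
with `|V| - 1` edges. -/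
def IsSpanningTree (G : Multigraph V E) (T : Set E) : Prop :=
  G.ConnectedOn T ∧ T.ncard + 1 = Nat.card V

/-- The set `ST_G(M)` of spanning trees of `G` containing all edges of `M`. -/
def ST (G : Multigraph V E) (M : Set E) : Set (Set E) :=
  {T | G.IsSpanningTree T ∧ M ⊆ T}

/-- `τ_G(M)`: the number of spanning trees of `G` containing all edges of `M`. -/
noncomputable def tau (G : Multigraph V E) (M : Set E) : ℕ :=
  (G.ST M).ncard

/-- The spanning subgraph `G⟨W⟩` is a forest (no cycles): there are no loops in
`W` and every edge of `W` is a bridge of `G⟨W⟩`. -/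
def IsForest (G : Multigraph V E) (W : Set E) : Prop :=
  ∀ e ∈ W, ¬ (G.inc e).IsDiag ∧
    ∀ u v : V, G.inc e = s(u, v) → ¬ G.Reach (W \ {e}) u v

/-- Edges with all endpoints in `U`: the edge set of the induced subgraph `G[U]`. -/
def edgesWithin (G : Multigraph V E) (U : Set V) : Set E :=
  {e | ∀ v ∈ G.inc e, v ∈ U}

/-- `E_G(U₁, U₂)`: edges with one end in `U₁` and the other end in `U₂`. -/
def edgesBetween (G : Multigraph V E) (U₁ U₂ : Set V) : Set E :=
  {e | ∃ u v, G.inc e = s(u, v) ∧ u ∈ U₁ ∧ v ∈ U₂}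

/-- `E_G(U) = E_G(U, V − U)`: edges with one end in `U` and the other outside. -/
def edgeBoundary (G : Multigraph V E) (U : Set V) : Set E :=
  G.edgesBetween U Uᶜ

/-- `U` is a clique of `G`: the induced subgraph `G[U]` is a complete graph,
i.e. exactly one edge joins each pair of distinct vertices of `U`, and there
are neither loops nor parallel edges inside `U`. -/
def IsClique (G : Multigraph V E) (U : Set V) : Prop :=
  (∀ u ∈ U, ∀ v ∈ U, u ≠ v → ∃! e : E, G.inc e = s(u, v)) ∧
    ∀ e ∈ G.edgesWithin U, ¬ (G.inc e).IsDiag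

/-- The degree of a vertex: the number of edges incident with it. -/
noncomputable def degree (G : Multigraph V E) (v : V) : ℕ :=
  {e : E | v ∈ G.inc e}.ncard

/-- The vertices incident with some edge of `W`: the vertex set of `G[W]`. -/
def supp (G : Multigraph V E) (W : Set E) : Set V :=
  {v | ∃ e ∈ W, v ∈ G.inc e}

/-- Edges `e` and `f` lie in the same component of `G[W]`. -/
def EdgeConn (G : Multigraph V E) (W : Set E) (e f : E) : Prop :=
  ∃ u v : V, u ∈ G.inc e ∧ v ∈ G.inc f ∧ G.Reach W u v

/-- Every component of `G[W]` is a star whose center lies in `C`. -/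
def StarComponents (G : Multigraph V E) (W : Set E) (C : Set V) : Prop :=
  ∀ e ∈ W, ∃ w ∈ C, ∀ f ∈ W, G.EdgeConn W e f →
    (w ∈ G.inc f ∧ ¬ (G.inc f).IsDiag ∧
      ∀ g ∈ W, G.EdgeConn W e g → G.inc g = G.inc f → g = f)

/-- The setoid on `V` identifying the vertices connected by edges of `W`. -/
def contractSetoid (G : Multigraph V E) (W : Set E) : Setoid V where
  r := G.Reach W
  iseqv := ⟨fun _ => Relation.ReflTransGen.refl,
    fun h => (@Relation.ReflTransGen.symmetric _ _ ⟨fun _ _ h' => G.step_symm W h'⟩).symm _ _ h,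
    fun h h' => Relation.ReflTransGen.trans h h'⟩

/-- The contraction `G/W` of the edges in `W`. -/
def contract (G : Multigraph V E) (W : Set E) :
    Multigraph (Quotient (G.contractSetoid W)) {e : E // e ∉ W} :=
  ⟨fun e => (G.inc e.val).map (Quotient.mk (G.contractSetoid W))⟩

/-- Deletion `G − D` of the edges in `D`. -/
def deleteEdges (G : Multigraph V E) (D : Set E) : Multigraph V {e : E // e ∉ D} :=
  ⟨fun e => G.inc e.val⟩

/-- The closed neighbourhood `N_G[S]`. -/
def closedNbhd (G : Multigraph V E) (S : Set V) : Set V :=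
  S ∪ {v | ∃ u ∈ S, ∃ e : E, G.inc e = s(u, v)}

/-- The induced subgraph `G[A]`, described using a choice `ends` of the pair of
endpoints of each edge. -/
def induce (G : Multigraph V E) (A : Set V) (ends : E → V × V)
    (hends : ∀ e, G.inc e = s((ends e).1, (ends e).2)) :
    Multigraph A {e : E // e ∈ G.edgesWithin A} :=
  ⟨fun e => s(⟨(ends e.val).1, e.prop _ (by rw [hends]; exact Sym2.mem_mk_left _ _)⟩,
              ⟨(ends e.val).2, e.prop _ (by rw [hends]; exact Sym2.mem_mk_right _ _)⟩)⟩

end Multigraph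


open Multigraph

/-- The vertices of the subgraph `G₀ = (V₀, E₀)` at which `G` is split when
forming `G ◇ G₀`: those `v ∈ V₀` with `E_G(v) ≠ E_{G₀}(v)`. -/
def Multigraph.splitSet {V : Type u} {E : Type v} (G : Multigraph V E)
    (V₀ : Set V) (E₀ : Set E) : Set V :=
  {v | v ∈ V₀ ∧ {e : E | v ∈ G.inc e} ≠ {e ∈ E₀ | v ∈ G.inc e}}

open Classical in
/-- The graph `G ◇ G₀` for a subgraph `G₀ = (V₀, E₀)` of `G`: for every vertex
`v ∈ V₀` with `E_G(v) ≠ E_{G₀}(v)`, a new vertex `v'` and a new edge `v v'` are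
added, and every edge of `E_G(v) − E₀` is rerouted from `v` to `v'`. -/
noncomputable def Multigraph.diamond {V : Type u} {E : Type v} (G : Multigraph V E)
    (V₀ : Set V) (E₀ : Set E) :
    Multigraph (V ⊕ ↥(G.splitSet V₀ E₀)) (E ⊕ ↥(G.splitSet V₀ E₀)) :=
  ⟨Sum.elim
    (fun e => (G.inc e).map (fun v =>
      if h : v ∈ G.splitSet V₀ E₀ ∧ e ∉ E₀ then Sum.inr ⟨v, h.1⟩ else Sum.inl v))
    (fun v => s(Sum.inl v.val, Sum.inr v))⟩

/-!
Contracting the new edges of `G ◇ G₀` recovers `G`. Whenever contracting the edges `F` of a graph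
`H` yields `G`, an edge set `T` of `G` is connected and spanning if and only if `F ∪ T` is so in
`H`. If moreover `H` has exactly `|F|` more vertices than `G`, then `F ∪ T` has the edge count of a
spanning tree of `H` exactly when `T` has that of `G`, so `T ↦ F ∪ T` is a bijection between the
spanning trees of `G` containing `N` and those of `H` containing `F ∪ N`.
-/

section SumSets

variable {E F : Type*}

theorem range_inr_union_image_inl_subset_iff {S T : Set E} :
    (Set.range Sum.inr ∪ Sum.inl '' S : Set (E ⊕ F)) ⊆ Set.range Sum.inr ∪ Sum.inl '' T ↔
      S ⊆ T := by
  simp [Set.subset_def]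

theorem range_inr_union_image_inl_injective :
    Function.Injective fun T : Set E => (Set.range Sum.inr ∪ Sum.inl '' T : Set (E ⊕ F)) :=
  fun _ _ h => Set.Subset.antisymm
    (range_inr_union_image_inl_subset_iff.mp h.subset)
    (range_inr_union_image_inl_subset_iff.mp h.superset)

theorem range_inr_union_image_inl_preimage_inl {T : Set (E ⊕ F)} (hT : Set.range Sum.inr ⊆ T) :
    Set.range Sum.inr ∪ Sum.inl '' (Sum.inl ⁻¹' T) = T := by
  rw [Set.image_preimage_eq_inter_range, Set.union_inter_distrib_left,
    Set.range_inr_union_range_inl, Set.inter_univ, Set.union_eq_self_of_subset_left hT]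

theorem ncard_range_inr_union_image_inl [Finite E] [Finite F] (T : Set E) :
    (Set.range Sum.inr ∪ Sum.inl '' T : Set (E ⊕ F)).ncard = Nat.card F + T.ncard := by
  have disjoint : Disjoint (Set.range Sum.inr) (Sum.inl '' T : Set (E ⊕ F)) :=
    Set.isCompl_range_inl_range_inr.symm.disjoint.mono_right (Set.image_subset_range _ _)
  rw [Set.ncard_union_eq disjoint, Set.ncard_range_of_injective Sum.inr_injective,
    Set.ncard_image_of_injective T Sum.inl_injective]

end SumSets

namespace Multigraph

theorem Reach.symm {V E : Type*} {G : Multigraph V E} {T : Set E} {a b : V}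
    (h : G.Reach T a b) : G.Reach T b a :=
  (G.contractSetoid T).symm h

theorem Reach.mono {V E : Type*} {G : Multigraph V E} {S T : Set E} (hST : S ⊆ T) {a b : V}
    (h : G.Reach S a b) : G.Reach T a b :=
  Relation.ReflTransGen.mono (fun _ _ ⟨e, he, hinc⟩ => ⟨e, hST he, hinc⟩) _ _ h

/-- `G` is the contraction of the edges `F` of `H`, with `π` sending each vertex of `H` to the
vertex of `G` it is contracted to. Unlike `Multigraph.contract`, the contracted graph is only
determined up to isomorphism, and the surviving edges are the left summand of the edge type of
`H`. -/
structure IsContraction {V W E F : Type*} (H : Multigraph W (E ⊕ F)) (G : Multigraph V E)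
    (π : W → V) : Prop where
  surjective : Function.Surjective π
  map_inc_inl (e : E) : (H.inc (Sum.inl e)).map π = G.inc e
  isDiag_map_inc_inr (f : F) : ((H.inc (Sum.inr f)).map π).IsDiag
  reach_of_eq {a b : W} : π a = π b → H.Reach (Set.range Sum.inr) a b

namespace IsContraction

variable {V W E F : Type*} {H : Multigraph W (E ⊕ F)} {G : Multigraph V E} {π : W → V}

theorem reach_map_of_step (h : H.IsContraction G π) {T : Set E} {a b : W}
    (hab : H.Step (Set.range Sum.inr ∪ Sum.inl '' T) a b) : G.Reach T (π a) (π b) := by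
  obtain ⟨_, ⟨f, rfl⟩ | ⟨e, he, rfl⟩, hinc⟩ := hab
  · have hπ : π a = π b := by simpa [hinc] using h.isDiag_map_inc_inr f
    exact hπ ▸ Relation.ReflTransGen.refl
  · exact Relation.ReflTransGen.single ⟨e, he, by rw [← h.map_inc_inl, hinc, Sym2.map_mk]⟩

theorem reach_union_of_eq (h : H.IsContraction G π) (T : Set E) {a b : W} (hab : π a = π b) :
    H.Reach (Set.range Sum.inr ∪ Sum.inl '' T) a b :=
  (h.reach_of_eq hab).mono Set.subset_union_left

theorem exists_step_of_step (h : H.IsContraction G π) {T : Set E} {u v : V}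
    (huv : G.Step T u v) :
    ∃ a b, π a = u ∧ π b = v ∧ H.Step (Set.range Sum.inr ∪ Sum.inl '' T) a b := by
  obtain ⟨e, he, hinc⟩ := huv
  obtain ⟨a, b, hab⟩ : ∃ a b, H.inc (Sum.inl e) = s(a, b) := Sym2.exists.mp ⟨_, rfl⟩
  have hstep : H.Step (Set.range Sum.inr ∪ Sum.inl '' T) a b :=
    ⟨Sum.inl e, Or.inr ⟨e, he, rfl⟩, hab⟩
  have hends : s(π a, π b) = s(u, v) := by rw [← Sym2.map_mk, ← hab, h.map_inc_inl, hinc]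
  obtain ⟨ha, hb⟩ | ⟨ha, hb⟩ := Sym2.eq_iff.mp hends
  · exact ⟨a, b, ha, hb, hstep⟩
  · exact ⟨b, a, hb, ha, H.step_symm _ hstep⟩

theorem reach_iff (h : H.IsContraction G π) {T : Set E} {a b : W} :
    H.Reach (Set.range Sum.inr ∪ Sum.inl '' T) a b ↔ G.Reach T (π a) (π b) := by
  constructor
  · intro hab
    induction hab with
    | refl => exact Relation.ReflTransGen.refl
    | tail _ hstep ih => exact ih.trans (h.reach_map_of_step hstep)
  · intro hab
    generalize hv : π b = v at hab
    induction hab generalizing b with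
    | refl => exact h.reach_union_of_eq T hv.symm
    | tail _ hstep ih =>
      obtain ⟨c, d, hc, hd, hcd⟩ := h.exists_step_of_step hstep
      exact ((ih hc).tail hcd).trans (h.reach_union_of_eq T (hd.trans hv.symm))

theorem connectedOn_iff (h : H.IsContraction G π) {T : Set E} :
    H.ConnectedOn (Set.range Sum.inr ∪ Sum.inl '' T) ↔ G.ConnectedOn T := by
  simp only [ConnectedOn, h.reach_iff, h.surjective.forall]

theorem isSpanningTree_iff [Finite E] [Finite F] (h : H.IsContraction G π)
    (hcard : Nat.card W = Nat.card V + Nat.card F) {T : Set E} :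
    H.IsSpanningTree (Set.range Sum.inr ∪ Sum.inl '' T) ↔ G.IsSpanningTree T := by
  refine and_congr h.connectedOn_iff ?_
  rw [ncard_range_inr_union_image_inl, hcard]
  lia

theorem image_ST [Finite E] [Finite F] (h : H.IsContraction G π)
    (hcard : Nat.card W = Nat.card V + Nat.card F) (N : Set E) :
    (fun T => Set.range Sum.inr ∪ Sum.inl '' T) '' G.ST N =
      H.ST (Set.range Sum.inr ∪ Sum.inl '' N) := by
  ext U
  constructor
  · rintro ⟨T, ⟨hT, hNT⟩, rfl⟩
    exact ⟨(h.isSpanningTree_iff hcard).mpr hT, range_inr_union_image_inl_subset_iff.mpr hNT⟩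
  · rintro ⟨hU, hNU⟩
    have hU_eq := range_inr_union_image_inl_preimage_inl (Set.subset_union_left.trans hNU)
    rw [← hU_eq] at hU hNU
    exact ⟨Sum.inl ⁻¹' U, ⟨(h.isSpanningTree_iff hcard).mp hU,
      range_inr_union_image_inl_subset_iff.mp hNU⟩, hU_eq⟩

end IsContraction

section Diamond

variable {V : Type u} {E : Type v} (G : Multigraph V E) (V₀ : Set V) (E₀ : Set E)

theorem map_inc_diamond_inl (e : E) :
    ((G.diamond V₀ E₀).inc (Sum.inl e)).map (Sum.elim id Subtype.val) = G.inc e := by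
  simp only [diamond, Sum.elim_inl, Sym2.map_map]
  refine (Sym2.map_congr fun v _ => ?_).trans (congrFun Sym2.map_id (G.inc e))
  simp only [Function.comp_apply]
  split_ifs <;> rfl

theorem reach_diamond_inl_proj (a : V ⊕ ↥(G.splitSet V₀ E₀)) :
    (G.diamond V₀ E₀).Reach (Set.range Sum.inr) (Sum.inl (Sum.elim id Subtype.val a)) a :=
  match a with
  | Sum.inl _ => Relation.ReflTransGen.refl
  | Sum.inr v => Relation.ReflTransGen.single ⟨Sum.inr v, ⟨v, rfl⟩, rfl⟩

theorem isContraction_diamond :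
    (G.diamond V₀ E₀).IsContraction G (Sum.elim id Subtype.val) where
  surjective v := ⟨Sum.inl v, rfl⟩
  map_inc_inl := G.map_inc_diamond_inl V₀ E₀
  isDiag_map_inc_inr _ := rfl
  reach_of_eq {a b} hab :=
    (G.reach_diamond_inl_proj V₀ E₀ a).symm.trans (hab ▸ G.reach_diamond_inl_proj V₀ E₀ b)

end Diamond

end Multigraph

/-- The hypothesis `hcard` says that the contracted edges form a forest of `H`. -/
theorem tau_diamond_general {V W E F : Type*} [Finite E] [Finite F]
    {H : Multigraph W (E ⊕ F)} {G : Multigraph V E} {π : W → V} (h : H.IsContraction G π)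
    (hcard : Nat.card W = Nat.card V + Nat.card F) (N : Set E) :
    G.tau N = H.tau (Set.range Sum.inr ∪ Sum.inl '' N) := by
  rw [tau, tau, ← h.image_ST hcard N,
    Set.ncard_image_of_injective _ range_inr_union_image_inl_injective]

/-- `τ_G(N) = τ_{G◇G₀}(M ∪ N)` where
`M = E(G◇G₀) − E(G)` is the set of newly added edges. -/
theorem tau_diamond {V : Type u} {E : Type v} [Fintype V] [Fintype E]
    (G : Multigraph V E) (hconn : G.Connected)
    (V₀ : Set V) (E₀ : Set E)
    (hsub : ∀ e ∈ E₀, ∀ v ∈ G.inc e, v ∈ V₀)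
    (N : Set E) :
    G.tau N = (G.diamond V₀ E₀).tau (Set.range Sum.inr ∪ Sum.inl '' N) :=
  tau_diamond_general (G.isContraction_diamond V₀ E₀) Nat.card_sum N

end PaperST
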